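/- Let N = 2^v r, where v > 0 and r is an odd prime such that 2 is a primitive root modulo r, and suppose 2^v < r - 1. Let 1 ≤ k ≤ N and let S be an N-periodic binary sequence such that L(S) = N - c ≥ L_{N,k}(S) = N - r + 1 for some positive integer c. Then there exist an integer m ≤ k and an N-periodic binary sequence E of Hamming weight m with support contained in {0, 1, ..., r - 1} such that L(S + E) = L_{N,k}(S); in particular L_{N,k}(S) = L_{N,k;r}(S). -/

import Mathlib

/-- Generating polynomial `S^N(x) = s_0 + s_1 x + ... + s_{N-1} x^{N-1}` of one period
of an `N`-periodic binary sequence. -/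
noncomputable def genPoly {N : ℕ} (S : Fin N → ZMod 2) : Polynomial (ZMod 2) :=
  ∑ i : Fin N, Polynomial.C (S i) * Polynomial.X ^ (i : ℕ)

/-- Linear complexity `L(S) = N - deg (gcd (1 - x^N, S^N(x)))`. -/
noncomputable def linComp {N : ℕ} (S : Fin N → ZMod 2) : ℕ :=
  N - (EuclideanDomain.gcd (1 - Polynomial.X ^ N) (genPoly S)).natDegree

/-- Hamming weight of one period of an `N`-periodic binary sequence. -/
def wt {N : ℕ} (T : Fin N → ZMod 2) : ℕ :=
  (Finset.univ.filter (fun i => T i ≠ 0)).card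

/-- `k`-error linear complexity `L_{N,k}(S)`. -/
noncomputable def errLC {N : ℕ} (S : Fin N → ZMod 2) (k : ℕ) : ℕ :=
  sInf {c | ∃ T : Fin N → ZMod 2, wt T ≤ k ∧ linComp (S + T) = c}

/-- `k`-error linear complexity with a zone of length `Z`: `L_{N,k;Z}(S)`. -/
noncomputable def errLCZone {N : ℕ} (S : Fin N → ZMod 2) (k Z : ℕ) : ℕ :=
  sInf {c | ∃ T : Fin N → ZMod 2, wt T ≤ k ∧ (∀ i : Fin N, Z ≤ (i : ℕ) → T i = 0) ∧
    linComp (S + T) = c}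

/-- `E_1(j)`: the sequence whose only nonzero term in one period is a `1` at position `j`. -/
def E1 {N : ℕ} (j : Fin N) : Fin N → ZMod 2 :=
  fun i => if i = j then 1 else 0

open Polynomial in
theorem fold_exists (N r : ℕ) (hr : 0 < r) (T : Fin N → ZMod 2) :
    ∃ E : Fin N → ZMod 2, wt E ≤ wt T ∧ (∀ i : Fin N, E i ≠ 0 → (i : ℕ) < r) ∧
      ((X : (ZMod 2)[X]) ^ r - 1) ∣ genPoly T - genPoly E := by
  classical
  let f : Fin N → Fin N := fun j => ⟨(j : ℕ) % r, lt_of_le_of_lt (Nat.mod_le _ _) j.2⟩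
  let E : Fin N → ZMod 2 := fun i => ∑ j : Fin N, if f j = i then T j else 0
  have key : ∀ i, E i ≠ 0 → ∃ j, f j = i ∧ T j ≠ 0 := by
    intro i hi
    obtain ⟨j, -, hj⟩ := Finset.exists_ne_zero_of_sum_ne_zero hi
    by_cases h : f j = i
    · exact ⟨j, h, by simpa [h] using hj⟩
    · simp [h] at hj
  refine ⟨E, ?_, ?_, ?_⟩
  · unfold wt
    refine le_trans (Finset.card_le_card ?_) (Finset.card_image_le (f := f))
    intro i hi
    obtain ⟨j, h1, h2⟩ := key i (by simpa using hi)
    exact Finset.mem_image.mpr ⟨j, by simpa using h2, h1⟩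
  · intro i hi
    obtain ⟨j, h1, h2⟩ := key i hi
    rw [← h1]
    exact Nat.mod_lt _ hr
  · have hE : genPoly E = ∑ j : Fin N, C (T j) * X ^ ((j : ℕ) % r) := by
      unfold genPoly
      have : ∀ i : Fin N, C (E i) * (X : (ZMod 2)[X]) ^ (i : ℕ)
          = ∑ j : Fin N, if f j = i then C (T j) * X ^ (i : ℕ) else 0 := by
        intro i
        simp only [E, map_sum, Finset.sum_mul]
        refine Finset.sum_congr rfl fun j _ => ?_
        split_ifs <;> simp
      simp only [this]
      rw [Finset.sum_comm]
      refine Finset.sum_congr rfl fun j _ => ?_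
      simp [f]
    rw [hE]
    unfold genPoly
    rw [← Finset.sum_sub_distrib]
    refine Finset.dvd_sum fun j _ => ?_
    rw [← mul_sub]
    refine Dvd.dvd.mul_left ?_ _
    have h : (X : (ZMod 2)[X]) ^ (j : ℕ) - X ^ ((j : ℕ) % r)
        = X ^ ((j : ℕ) % r) * ((X ^ r) ^ ((j : ℕ) / r) - 1) := by
      rw [mul_sub, ← pow_mul, ← pow_add, Nat.mod_add_div, mul_one]
    rw [h]
    exact Dvd.dvd.mul_left (sub_one_dvd_pow_sub_one _ _) _

theorem genPoly_add {N : ℕ} (S T : Fin N → ZMod 2) :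
    genPoly (S + T) = genPoly S + genPoly T := by
  simp [genPoly, add_mul, Finset.sum_add_distrib]

open Polynomial in
theorem cyc_irr (r : ℕ) (hr : r.Prime) (hodd : Odd r)
    (hprim : orderOf (2 : ZMod r) = r - 1) : Irreducible (cyclotomic r (ZMod 2)) := by
  have h2 : ¬ 2 ∣ r := hodd.not_two_dvd_nat
  refine ZMod.irreducible_of_dvd_cyclotomic_of_natDegree h2 dvd_rfl ?_
  rw [natDegree_cyclotomic, Nat.totient_prime hr, ← hprim, ← orderOf_units]
  simp

open Polynomial in
theorem one_sub_factor (v r : ℕ) (hr : r.Prime) :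
    (1 - X ^ (2 ^ v * r) : (ZMod 2)[X])
      = cyclotomic r (ZMod 2) ^ 2 ^ v * (X - 1) ^ 2 ^ v := by
  have := Fact.mk hr
  rw [← mul_pow, cyclotomic_prime_mul_X_sub_one, sub_pow_char_pow, one_pow, ← pow_mul, mul_comm r,
    ← neg_sub, CharTwo.neg_eq]

open Polynomial in
theorem cyc_dvd (v r : ℕ) (hr : r.Prime) (hvr : 2 ^ v < r - 1)
    (hirr : Irreducible (cyclotomic r (ZMod 2))) (P : (ZMod 2)[X])
    (hdeg : r - 1 ≤ (EuclideanDomain.gcd (1 - X ^ (2 ^ v * r)) P).natDegree) :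
    cyclotomic r (ZMod 2) ∣ P := by
  by_contra hnd
  set G := EuclideanDomain.gcd (1 - X ^ (2 ^ v * r)) P with hG
  have h1 : G ∣ 1 - X ^ (2 ^ v * r) := EuclideanDomain.gcd_dvd_left _ _
  have h2 : ¬ cyclotomic r (ZMod 2) ∣ G := fun h =>
    hnd (h.trans (EuclideanDomain.gcd_dvd_right _ _))
  have hc : IsCoprime G (cyclotomic r (ZMod 2) ^ 2 ^ v) :=
    (((Irreducible.coprime_iff_not_dvd hirr).mpr h2).pow_left).symm
  rw [one_sub_factor v r hr] at h1
  have h3 : G ∣ (X - 1) ^ 2 ^ v := hc.dvd_of_dvd_mul_left h1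
  have hm : (X - 1 : (ZMod 2)[X]).Monic := by simpa using monic_X_sub_C (1 : ZMod 2)
  have hd : (X - 1 : (ZMod 2)[X]).natDegree = 1 := by simpa using natDegree_X_sub_C (1 : ZMod 2)
  have h4 := natDegree_le_of_dvd h3 (hm.pow _).ne_zero
  rw [hm.natDegree_pow, hd] at h4
  omega

open Polynomial in
theorem linComp_le_of_cyc_dvd (v r : ℕ) (hr : r.Prime) (S : Fin (2 ^ v * r) → ZMod 2)
    (h : cyclotomic r (ZMod 2) ∣ genPoly S) : linComp S ≤ 2 ^ v * r - (r - 1) := by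
  unfold linComp
  have hN : (1 - X ^ (2 ^ v * r) : (ZMod 2)[X]) ≠ 0 := by
    rw [one_sub_factor v r hr]
    have hm : (X - 1 : (ZMod 2)[X]).Monic := by simpa using monic_X_sub_C (1 : ZMod 2)
    exact (((cyclotomic.monic r (ZMod 2)).pow _).mul (hm.pow _)).ne_zero
  have h1 : cyclotomic r (ZMod 2) ∣ 1 - X ^ (2 ^ v * r) := by
    rw [one_sub_factor v r hr]
    exact Dvd.dvd.mul_right (dvd_pow_self _ (by positivity)) _
  have h2 := EuclideanDomain.dvd_gcd h1 h
  have h3 : EuclideanDomain.gcd (1 - X ^ (2 ^ v * r)) (genPoly S) ≠ 0 :=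
    ne_zero_of_dvd_ne_zero hN (EuclideanDomain.gcd_dvd_left _ _)
  have h4 := natDegree_le_of_dvd h2 h3
  rw [natDegree_cyclotomic, Nat.totient_prime hr] at h4
  omega

/-- For `N = 2^v r`, `2^v < r - 1`, `2` primitive mod the odd prime `r`, and
`L(S) = N - c ≥ L_{N,k}(S) = N - r + 1`: an error vector reaching `L_{N,k}(S)`
exists with support in `[0, r)`; in particular `L_{N,k}(S) = L_{N,k;r}(S)`. -/
theorem stmt17 (v r k c : ℕ) (hv : 0 < v) (hr : r.Prime) (hodd : Odd r)
    (hprim : orderOf (2 : ZMod r) = r - 1) (hvr : 2^v < r - 1)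
    (hk1 : 1 ≤ k) (hk : k ≤ 2^v * r) (hc : 0 < c)
    (S : Fin (2^v * r) → ZMod 2)
    (hLS : linComp S = 2^v * r - c)
    (hge : errLC S k ≤ linComp S)
    (hEq : errLC S k = 2^v * r - r + 1) :
    (∃ m ≤ k, ∃ E : Fin (2^v * r) → ZMod 2, wt E = m ∧
      (∀ i : Fin (2^v * r), E i ≠ 0 → (i : ℕ) < r) ∧
      linComp (S + E) = errLC S k) ∧
    errLC S k = errLCZone S k r := by
  have hr2 := hr.two_le
  have hrN : r ≤ 2 ^ v * r := Nat.le_mul_of_pos_left _ (by positivity)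
  obtain ⟨T, hT, hTL⟩ : ∃ T : Fin (2 ^ v * r) → ZMod 2, wt T ≤ k ∧ linComp (S + T) = errLC S k :=
    Nat.sInf_mem (s := {c | ∃ T : Fin (2 ^ v * r) → ZMod 2, wt T ≤ k ∧ linComp (S + T) = c})
      ⟨_, 0, by simp [wt], rfl⟩
  have hdT : Polynomial.cyclotomic r (ZMod 2) ∣ genPoly (S + T) := by
    refine cyc_dvd v r hr hvr (cyc_irr r hr hodd hprim) _ ?_
    have h := hTL.trans hEq
    unfold linComp at h
    omega
  obtain ⟨E, hE1, hE2, hE3⟩ := fold_exists (2 ^ v * r) r hr.pos T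
  have hdE : Polynomial.cyclotomic r (ZMod 2) ∣ genPoly (S + E) := by
    have h1 : genPoly (S + E) = genPoly (S + T) - (genPoly T - genPoly E) := by
      rw [genPoly_add, genPoly_add]; ring
    rw [h1]
    exact dvd_sub hdT ((Polynomial.cyclotomic.dvd_X_pow_sub_one r (ZMod 2)).trans hE3)
  have hle := linComp_le_of_cyc_dvd v r hr (S + E) hdE
  have hgeb : errLC S k ≤ linComp (S + E) := Nat.sInf_le ⟨E, hE1.trans hT, rfl⟩
  have hEL : linComp (S + E) = errLC S k := by omega
  refine ⟨⟨wt E, hE1.trans hT, E, rfl, hE2, hEL⟩, le_antisymm ?_ ?_⟩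
  · have hz : ∀ i : Fin (2 ^ v * r), r ≤ (i : ℕ) → E i = 0 := fun i hi => by
      by_contra h
      exact absurd (hE2 i h) (by omega)
    obtain ⟨Tb, hTb, -, hLb⟩ := Nat.sInf_mem
      (s := {c | ∃ T : Fin (2 ^ v * r) → ZMod 2, wt T ≤ k ∧
        (∀ i : Fin (2 ^ v * r), r ≤ (i : ℕ) → T i = 0) ∧ linComp (S + T) = c})
      ⟨_, E, hE1.trans hT, hz, rfl⟩
    exact Nat.sInf_le ⟨Tb, hTb, hLb⟩
  · refine Nat.sInf_le ⟨E, hE1.trans hT, fun i hi => ?_, hEL⟩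
    by_contra h
    exact absurd (hE2 i h) (by omega)
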